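/- Let F = [[L̃, -Δ̃],[Q* L̃, -Q*((1/R)I + Δ̃)]] arise from a strongly connected weighted digraph with Laplacian L̃ (L̃·1 = 0), positive diagonal matrices Δ̃ and Q*, and R > 0. Then zero is an eigenvalue of F with algebraic multiplicity one, and all other eigenvalues of F have negative real parts. -/

import Mathlib

open Matrix

/-!
Write `F (x, y) = (z, q (z - r y))` with `z = L̃ x - Δ̃ y` and `r = 1 / R`.

* If `F² (x, y) = 0`, then `F (x, y)` has the form `(u, 0)` with `L̃ u = 0`, and
  `L̃ x = (1 + R Δ̃) u`. Where `u` attains a positive maximum, so do all its out-neighbours, and a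
  maximum point of `x` among them would have `L̃ x ≤ 0 < (1 + R Δ̃) u`; hence `u = 0`. So `0` is a
  semisimple eigenvalue of `F`, and `ker F ≅ ker L̃`, which is spanned by the constants.
* If `F (x, y) = μ (x, y)` with `μ ≠ 0` and `0 ≤ Re μ`, eliminating `y` shows that `μ` is an
  eigenvalue of `L̃ - Δ̃ g(μ)`, where `g(μ)` is diagonal with entries of positive real part. The
  Gershgorin disc of row `k` contains `μ` only if `μ + Δ̃ₖ gₖ(μ) = 0`, which is impossible.
-/

variable {n : Type*}

section Eigenspace

open Module

lemma maxGenEigenspace_eq_eigenspace_of_genEigenspace_two_le {A M : Type*} [CommRing A]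
    [AddCommGroup M] [Module A M] {f : End A M} {μ : A}
    (h : f.genEigenspace μ 2 ≤ f.eigenspace μ) : f.maxGenEigenspace μ = f.eigenspace μ := by
  refine le_antisymm (fun w hw ↦ ?_) (f.genEigenspace_le_maximal μ 1)
  obtain ⟨k, hk⟩ := (End.mem_maxGenEigenspace f μ w).mp hw
  induction k generalizing w with
  | zero => simp_all
  | succ k ih =>
    rw [pow_succ, End.mul_apply] at hk
    have hmem : (f - μ • 1) w ∈ f.eigenspace μ :=
      ih _ ((End.mem_maxGenEigenspace f μ _).mpr ⟨k, hk⟩) hk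
    apply h
    rw [← Nat.cast_ofNat, End.mem_genEigenspace_nat, LinearMap.mem_ker, pow_two, End.mul_apply]
    simpa [sub_eq_zero, End.mem_eigenspace_iff] using hmem

lemma rootMultiplicity_charpoly_eq_finrank_eigenspace {K V : Type*} [Field K] [AddCommGroup V]
    [Module K V] [FiniteDimensional K V] {f : End K V} {μ : K}
    (h : f.genEigenspace μ 2 ≤ f.eigenspace μ) :
    f.charpoly.rootMultiplicity μ = finrank K (f.eigenspace μ) := by
  rw [← LinearMap.finrank_maxGenEigenspace_eq,
    maxGenEigenspace_eq_eigenspace_of_genEigenspace_two_le h]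

end Eigenspace

lemma eq_zero_of_norm_ofReal_add_le {δ : ℝ} {z : ℂ} (hz : 0 ≤ z.re) (h : ‖δ + z‖ ≤ δ) :
    z = 0 := by
  have hδ : 0 ≤ δ := (norm_nonneg _).trans h
  have hsq : (δ + z.re) ^ 2 + z.im ^ 2 ≤ δ ^ 2 := by
    simpa [← Complex.normSq_eq_norm_sq, Complex.normSq_apply, ← pow_two] using
      pow_le_pow_left₀ (norm_nonneg _) h 2
  have hδz : 0 ≤ δ * z.re := mul_nonneg hδ hz
  have hre : z.re = 0 := by nlinarith
  have him : z.im = 0 := by nlinarith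
  exact Complex.ext hre him

/-- The Laplacian of a weighted digraph, in the sign convention with nonnegative off-diagonal
entries (the edge weights) and zero row sums. -/
structure IsDigraphLaplacian [Fintype n] (G : Matrix n n ℝ) : Prop where
  nonneg_of_ne : ∀ ⦃i j⦄, i ≠ j → 0 ≤ G i j
  sum_row : ∀ i, ∑ j, G i j = 0

namespace IsDigraphLaplacian

variable [Fintype n] {G : Matrix n n ℝ}

lemma smul (hG : IsDigraphLaplacian G) {c : ℝ} (hc : 0 ≤ c) : IsDigraphLaplacian (c • G) where
  nonneg_of_ne _ _ hij := mul_nonneg hc (hG.nonneg_of_ne hij)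
  sum_row i := by simp [← Finset.mul_sum, hG.sum_row i]

lemma of_weights [DecidableEq n] {a : n → n → ℝ} (ha : ∀ i j, 0 ≤ a i j) (hdiag : ∀ i, a i i = 0)
    (hG : ∀ i j, G i j = if i = j then -∑ k, a i k else a i j) : IsDigraphLaplacian G where
  nonneg_of_ne i j hij := by simpa [hG, hij] using ha i j
  sum_row i := by
    have hrow : ∀ j, G i j = a i j - if i = j then ∑ k, a i k else 0 := fun j ↦ by
      rw [hG]
      split_ifs with hij
      · simp [← hij, hdiag]
      · simp
    simp [hrow]

lemma reflTransGen_smul_of_weights [DecidableEq n] {a : n → n → ℝ} (hdiag : ∀ i, a i i = 0)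
    (hG : ∀ i j, G i j = if i = j then -∑ k, a i k else a i j) {c : ℝ} (hc : 0 < c) {i j : n}
    (h : Relation.ReflTransGen (fun p q ↦ 0 < a p q) i j) :
    Relation.ReflTransGen (fun p q ↦ 0 < (c • G) p q) i j := by
  refine Relation.ReflTransGen.mono (fun p q hpq ↦ ?_) _ _ h
  have hne : p ≠ q := by
    rintro rfl
    exact hpq.ne' (hdiag p)
  simpa [hG, hne] using mul_pos hc hpq

lemma mulVec_apply (hG : IsDigraphLaplacian G) (x : n → ℝ) (i : n) :
    (G *ᵥ x) i = ∑ j, G i j * (x j - x i) := by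
  simp [mulVec, dotProduct, mul_sub, ← Finset.sum_mul, hG.sum_row i]

lemma mul_sub_nonpos (hG : IsDigraphLaplacian G) {x : n → ℝ} {i j : n}
    (h : 0 < G i j → x j ≤ x i) : G i j * (x j - x i) ≤ 0 := by
  rcases eq_or_ne i j with rfl | hij
  · simp
  rcases (hG.nonneg_of_ne hij).eq_or_lt with h0 | hpos
  · simp [← h0]
  · exact mul_nonpos_of_nonneg_of_nonpos hpos.le (sub_nonpos.mpr (h hpos))

lemma mulVec_apply_nonpos (hG : IsDigraphLaplacian G) {x : n → ℝ} {i : n}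
    (h : ∀ j, 0 < G i j → x j ≤ x i) : (G *ᵥ x) i ≤ 0 := by
  rw [hG.mulVec_apply]
  exact Finset.sum_nonpos fun j _ ↦ hG.mul_sub_nonpos (h j)

lemma eq_of_mulVec_apply_eq_zero (hG : IsDigraphLaplacian G) {x : n → ℝ} {i j : n}
    (hx : (G *ᵥ x) i = 0) (hmax : ∀ k, x k ≤ x i) (hij : 0 < G i j) : x j = x i := by
  rw [hG.mulVec_apply,
    Finset.sum_eq_zero_iff_of_nonpos fun k _ ↦ hG.mul_sub_nonpos fun _ ↦ hmax k] at hx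
  simpa [hij.ne', sub_eq_zero] using hx j (Finset.mem_univ j)

lemma le_of_mulVec_eq_zero (hG : IsDigraphLaplacian G) {x : n → ℝ} (hx : G *ᵥ x = 0) {r : n}
    (hr : ∀ i, Relation.ReflTransGen (fun p q ↦ 0 < G p q) i r) (i : n) : x i ≤ x r := by
  have : Nonempty n := ⟨r⟩
  obtain ⟨m, hm⟩ := Finite.exists_max x
  have hreach : ∀ j, Relation.ReflTransGen (fun p q ↦ 0 < G p q) m j → x j = x m := fun j hj ↦ by
    induction hj with
    | refl => rfl
    | tail _ hpq ih =>
      exact (hG.eq_of_mulVec_apply_eq_zero (congrFun hx _) (fun k ↦ ih ▸ hm k) hpq).trans ih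
  exact hreach r (hr m) ▸ hm i

lemma ker_mulVecLin_eq_span_one (hG : IsDigraphLaplacian G) {r : n}
    (hr : ∀ i, Relation.ReflTransGen (fun p q ↦ 0 < G p q) i r) :
    LinearMap.ker G.mulVecLin = Submodule.span ℝ {1} := by
  ext x
  simp only [LinearMap.mem_ker, mulVecLin_apply, Submodule.mem_span_singleton]
  constructor
  · intro hx
    have hneg : G *ᵥ (-x) = 0 := by rw [mulVec_neg, hx, neg_zero]
    refine ⟨x r, funext fun i ↦ ?_⟩
    simpa using le_antisymm (neg_le_neg_iff.mp (hG.le_of_mulVec_eq_zero hneg hr i))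
      (hG.le_of_mulVec_eq_zero hx hr i)
  · rintro ⟨c, rfl⟩
    ext i
    simp [hG.mulVec_apply]

lemma finrank_ker_mulVecLin_eq_one (hG : IsDigraphLaplacian G) {r : n}
    (hr : ∀ i, Relation.ReflTransGen (fun p q ↦ 0 < G p q) i r) :
    Module.finrank ℝ (LinearMap.ker G.mulVecLin) = 1 := by
  have : Nonempty n := ⟨r⟩
  rw [hG.ker_mulVecLin_eq_span_one hr, finrank_span_singleton one_ne_zero]

lemma nonpos_of_mulVec_eq_mul (hG : IsDigraphLaplacian G) {c u x : n → ℝ} (hc : ∀ i, 0 < c i)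
    (hu : G *ᵥ u = 0) (hx : G *ᵥ x = c * u) (i : n) : u i ≤ 0 := by
  have : Nonempty n := ⟨i⟩
  -- Maximizing lexicographically picks a maximum of `x` on the set where `u` is maximal.
  obtain ⟨m, hm⟩ := Finite.exists_max fun j ↦ toLex (u j, x j)
  simp only [Prod.Lex.toLex_le_toLex'] at hm
  have hxm : (G *ᵥ x) m ≤ 0 := hG.mulVec_apply_nonpos fun j hj ↦
    (hm j).2 (hG.eq_of_mulVec_apply_eq_zero (congrFun hu m) (fun k ↦ (hm k).1) hj)
  rw [hx, Pi.mul_apply] at hxm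
  exact (hm i).1.trans (nonpos_of_mul_nonpos_right hxm (hc m))

lemma eq_zero_of_mulVec_eq_mul (hG : IsDigraphLaplacian G) {c u x : n → ℝ} (hc : ∀ i, 0 < c i)
    (hu : G *ᵥ u = 0) (hx : G *ᵥ x = c * u) : u = 0 := by
  have hneg : ∀ i, (-u) i ≤ 0 := hG.nonpos_of_mulVec_eq_mul hc
    (by rw [mulVec_neg, hu, neg_zero]) (x := -x) (by rw [mulVec_neg, hx, mul_neg])
  exact funext fun i ↦ le_antisymm (hG.nonpos_of_mulVec_eq_mul hc hu hx i) (by simpa using hneg i)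

variable [DecidableEq n]

lemma sum_erase_norm (hG : IsDigraphLaplacian G) (k : n) :
    ∑ j ∈ Finset.univ.erase k, ‖G k j‖ = -G k k := by
  calc ∑ j ∈ Finset.univ.erase k, ‖G k j‖ = ∑ j ∈ Finset.univ.erase k, G k j :=
        Finset.sum_congr rfl fun j hj ↦
          Real.norm_of_nonneg (hG.nonneg_of_ne (Finset.ne_of_mem_erase hj).symm)
    _ = -G k k := by rw [Finset.sum_erase_eq_sub (Finset.mem_univ k), hG.sum_row, zero_sub]

lemma exists_add_eq_zero_of_hasEigenvalue (hG : IsDigraphLaplacian G) {c : n → ℂ} {μ : ℂ}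
    (hμ : Module.End.HasEigenvalue (toLin' (G.map Complex.ofReal - diagonal c)) μ)
    (hre : ∀ k, 0 ≤ (μ + c k).re) : ∃ k, μ + c k = 0 := by
  obtain ⟨k, hk⟩ := eigenvalue_mem_ball hμ
  have hradius : ∑ j ∈ Finset.univ.erase k, ‖(G.map Complex.ofReal - diagonal c) k j‖ = -G k k := by
    rw [← hG.sum_erase_norm]
    refine Finset.sum_congr rfl fun j hj ↦ ?_
    simp [diagonal_apply_ne _ (Finset.ne_of_mem_erase hj).symm]
  have hcenter : μ - (G.map Complex.ofReal - diagonal c) k k = (-G k k : ℝ) + (μ + c k) := by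
    simp only [Matrix.sub_apply, map_apply, diagonal_apply_eq, Complex.ofReal_neg]
    ring
  rw [hradius, mem_closedBall_iff_norm, hcenter] at hk
  exact ⟨k, eq_zero_of_norm_ofReal_add_le (hre k) hk⟩

end IsDigraphLaplacian

/-- The value at `μ` of the transfer function from a node state `x` to its filter state `y`, both
evolving as `exp (μ t)`, under `y' = q (x' - r y)`. -/
noncomputable def transferGain (q r : ℝ) (μ : ℂ) : ℂ := ((q : ℂ)⁻¹ + r * μ⁻¹)⁻¹

section transferGain

variable {q r : ℝ} {μ : ℂ}

lemma inv_add_mul_inv_re_pos (hq : 0 < q) (hr : 0 ≤ r) (hμ : 0 ≤ μ.re) :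
    0 < ((q : ℂ)⁻¹ + r * μ⁻¹).re := by
  have hμinv : 0 ≤ (μ⁻¹).re := by
    rw [Complex.inv_re]
    exact div_nonneg hμ (Complex.normSq_nonneg μ)
  rw [← Complex.ofReal_inv, Complex.add_re, Complex.ofReal_re, Complex.re_ofReal_mul]
  positivity

lemma transferGain_re_pos (hq : 0 < q) (hr : 0 ≤ r) (hμ : 0 ≤ μ.re) :
    0 < (transferGain q r μ).re := by
  have hpos := inv_add_mul_inv_re_pos hq hr hμ
  rw [transferGain, Complex.inv_re]
  exact div_pos hpos (Complex.normSq_pos.mpr fun h ↦ by simp [h] at hpos)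

lemma eq_transferGain_mul (hq : 0 < q) (hr : 0 ≤ r) (hμ : 0 ≤ μ.re) (hμ0 : μ ≠ 0) {x y : ℂ}
    (h : q * (μ * x - r * y) = μ * y) : y = transferGain q r μ * x := by
  have hne : (q : ℂ)⁻¹ + r * μ⁻¹ ≠ 0 := fun h0 ↦ by
    simpa [h0] using inv_add_mul_inv_re_pos hq hr hμ
  have hq0 : (q : ℂ) ≠ 0 := by exact_mod_cast hq.ne'
  rw [transferGain, eq_inv_mul_iff_mul_eq₀ hne]
  field_simp
  linear_combination -h

end transferGain

variable [DecidableEq n]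

/-- The closed-loop matrix `F` of a network with Laplacian `G`, in-degrees `d`, steady-state filter
gains `q` and inverse measurement-noise weight `r = 1 / R`. The ring of entries is arbitrary so that
`F` can be complexified. -/
def closedLoopMatrix [Fintype n] {A : Type*} [CommRing A] (G : Matrix n n A) (d q : n → A) (r : A) :
    Matrix (n ⊕ n) (n ⊕ n) A :=
  fromBlocks G (-diagonal d) (diagonal q * G)
    (-(diagonal q * (r • (1 : Matrix n n A) + diagonal d)))

variable [Fintype n]

section closedLoopMatrix

variable {A : Type*} [CommRing A]

lemma closedLoopMatrix_map {B : Type*} [CommRing B] (f : A →+* B) (G : Matrix n n A) (d q : n → A)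
    (r : A) :
    (closedLoopMatrix G d q r).map f = closedLoopMatrix (G.map f) (f ∘ d) (f ∘ q) (f r) := by
  simp only [closedLoopMatrix, fromBlocks_map]
  congr 1 <;> ext i j <;> simp [diagonal_apply, one_apply, apply_ite f, neg_ite]

lemma closedLoopMatrix_mulVec_eq_iff {G : Matrix n n A} {d q : n → A} {r : A} {x y x' y' : n → A} :
    closedLoopMatrix G d q r *ᵥ Sum.elim x y = Sum.elim x' y' ↔
      G *ᵥ x - d * y = x' ∧ q * (x' - r • y) = y' := by
  have hmul : closedLoopMatrix G d q r *ᵥ Sum.elim x y =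
      Sum.elim (G *ᵥ x - d * y) (q * (G *ᵥ x - d * y - r • y)) := by
    rw [closedLoopMatrix, fromBlocks_mulVec]
    ext (i | i)
    · simp [neg_mulVec, mulVec_diagonal, sub_eq_add_neg]
    · simp only [neg_mulVec, ← mulVec_mulVec, mulVec_diagonal, add_mulVec, smul_mulVec, one_mulVec,
        Sum.elim_comp_inl, Sum.elim_comp_inr, Sum.elim_inr, Pi.add_apply, Pi.neg_apply,
        Pi.sub_apply, Pi.mul_apply, Pi.smul_apply, smul_eq_mul]
      ring
  rw [hmul, Sum.elim_eq_iff]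
  exact and_congr_right fun hx ↦ by rw [hx]

variable {K : Type*} [Field K] {G : Matrix n n K} {d q : n → K} {r : K}

lemma closedLoopMatrix_mulVec_eq_zero_iff (hq : ∀ i, q i ≠ 0) (hr : r ≠ 0) {x y : n → K} :
    closedLoopMatrix G d q r *ᵥ Sum.elim x y = 0 ↔ G *ᵥ x = 0 ∧ y = 0 := by
  rw [← Sum.elim_zero_zero, closedLoopMatrix_mulVec_eq_iff]
  constructor
  · rintro ⟨hx, hy⟩
    obtain rfl : y = 0 := funext fun i ↦ by simpa [hq i, hr] using congrFun hy i
    simpa using hx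
  · rintro ⟨hx, rfl⟩
    simp [hx]

lemma finrank_ker_closedLoopMatrix (hq : ∀ i, q i ≠ 0) (hr : r ≠ 0) :
    Module.finrank K (LinearMap.ker (closedLoopMatrix G d q r).mulVecLin) =
      Module.finrank K (LinearMap.ker G.mulVecLin) := by
  have hmem : ∀ w, w ∈ LinearMap.ker (closedLoopMatrix G d q r).mulVecLin ↔
      G *ᵥ (w ∘ Sum.inl) = 0 ∧ w ∘ Sum.inr = 0 := fun w ↦ by
    rw [LinearMap.mem_ker, mulVecLin_apply, ← closedLoopMatrix_mulVec_eq_zero_iff hq hr,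
      Sum.elim_comp_inl_inr]
  let restrict : LinearMap.ker (closedLoopMatrix G d q r).mulVecLin →ₗ[K]
      LinearMap.ker G.mulVecLin :=
    (LinearMap.funLeft K K Sum.inl).restrict fun w hw ↦ ((hmem w).mp hw).1
  refine (LinearEquiv.ofBijective restrict ⟨fun w w' h ↦ ?_, fun x ↦ ?_⟩).finrank_eq
  · have hinl : w.1 ∘ Sum.inl = w'.1 ∘ Sum.inl := congrArg Subtype.val h
    have hinr : w.1 ∘ Sum.inr = w'.1 ∘ Sum.inr :=
      ((hmem _).mp w.2).2.trans ((hmem _).mp w'.2).2.symm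
    rw [Subtype.ext_iff, ← Sum.elim_comp_inl_inr w.1, hinl, hinr, Sum.elim_comp_inl_inr]
  · exact ⟨⟨Sum.elim x.1 0, (hmem _).mpr ⟨x.2, rfl⟩⟩, rfl⟩

end closedLoopMatrix

section Multiplicity

variable {G : Matrix n n ℝ} {d q : n → ℝ} {r : ℝ}

lemma closedLoopMatrix_mulVec_eq_zero_of_mulVec_mulVec_eq_zero (hG : IsDigraphLaplacian G)
    (hd : ∀ i, 0 ≤ d i) (hq : ∀ i, 0 < q i) (hr : 0 < r) {w : n ⊕ n → ℝ}
    (hw : closedLoopMatrix G d q r *ᵥ (closedLoopMatrix G d q r *ᵥ w) = 0) :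
    closedLoopMatrix G d q r *ᵥ w = 0 := by
  obtain ⟨x, y, rfl⟩ : ∃ x y, w = Sum.elim x y := ⟨_, _, (Sum.elim_comp_inl_inr w).symm⟩
  obtain ⟨u, v, huv⟩ : ∃ u v, closedLoopMatrix G d q r *ᵥ Sum.elim x y = Sum.elim u v :=
    ⟨_, _, (Sum.elim_comp_inl_inr _).symm⟩
  rw [huv, closedLoopMatrix_mulVec_eq_zero_iff (fun i ↦ (hq i).ne') hr.ne'] at hw
  obtain ⟨hu, rfl⟩ := hw
  obtain ⟨hx, hy⟩ := closedLoopMatrix_mulVec_eq_iff.mp huv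
  have hry : ∀ i, r * y i = u i := fun i ↦ by
    simpa [(hq i).ne', sub_eq_zero, eq_comm] using congrFun hy i
  have hxu : G *ᵥ x = (fun i ↦ 1 + d i / r) * u := by
    ext i
    have hxi : (G *ᵥ x) i - d i * y i = u i := congrFun hx i
    have hyi : y i = u i / r := by rw [← hry, mul_div_cancel_left₀ _ hr.ne']
    rw [hyi] at hxi
    rw [Pi.mul_apply]
    linear_combination hxi
  have hc : ∀ i, 0 < 1 + d i / r := fun i ↦
    add_pos_of_pos_of_nonneg one_pos (div_nonneg (hd i) hr.le)
  rw [huv, hG.eq_zero_of_mulVec_eq_mul hc hu hxu, Sum.elim_zero_zero]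

lemma rootMultiplicity_charpoly_closedLoopMatrix (hG : IsDigraphLaplacian G)
    (hd : ∀ i, 0 ≤ d i) (hq : ∀ i, 0 < q i) (hr : 0 < r) :
    (closedLoopMatrix G d q r).charpoly.rootMultiplicity 0 =
      Module.finrank ℝ (LinearMap.ker G.mulVecLin) := by
  rw [← charpoly_toLin', toLin'_apply', rootMultiplicity_charpoly_eq_finrank_eigenspace,
    Module.End.eigenspace_zero, finrank_ker_closedLoopMatrix (fun i ↦ (hq i).ne') hr.ne']
  intro w hw
  rw [← Nat.cast_ofNat, Module.End.mem_genEigenspace_nat] at hw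
  rw [Module.End.eigenspace_zero, LinearMap.mem_ker, mulVecLin_apply]
  apply closedLoopMatrix_mulVec_eq_zero_of_mulVec_mulVec_eq_zero hG hd hq hr
  simpa [pow_two] using hw

end Multiplicity

section Stability

open Module.End

variable {q : n → ℝ} {r : ℝ} {μ : ℂ}

lemma hasEigenvalue_sub_diagonal_transferGain {G : Matrix n n ℂ} {d : n → ℂ} (hq : ∀ i, 0 < q i)
    (hr : 0 ≤ r) (hμ : 0 ≤ μ.re) (hμ0 : μ ≠ 0)
    (h : HasEigenvalue (toLin' (closedLoopMatrix G d (fun i ↦ (q i : ℂ)) r)) μ) :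
    HasEigenvalue (toLin' (G - diagonal fun i ↦ d i * transferGain (q i) r μ)) μ := by
  obtain ⟨w, hw⟩ := h.exists_hasEigenvector
  obtain ⟨x, y, rfl⟩ : ∃ x y, w = Sum.elim x y := ⟨_, _, (Sum.elim_comp_inl_inr w).symm⟩
  have hF : closedLoopMatrix G d (fun i ↦ (q i : ℂ)) r *ᵥ Sum.elim x y =
      Sum.elim (μ • x) (μ • y) := by
    rw [← toLin'_apply, hw.apply_eq_smul]
    exact Sum.comp_elim (μ • ·) x y
  obtain ⟨hx, hy⟩ := closedLoopMatrix_mulVec_eq_iff.mp hF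
  have hgain : ∀ i, y i = transferGain (q i) r μ * x i := fun i ↦
    eq_transferGain_mul (hq i) hr hμ hμ0 (congrFun hy i)
  refine hasEigenvalue_of_hasEigenvector (x := x) ⟨mem_eigenspace_iff.mpr ?_, ?_⟩
  · rw [toLin'_apply, ← hx, sub_mulVec]
    ext i
    simp [mulVec_diagonal, hgain, mul_assoc]
  · rintro rfl
    obtain rfl : y = 0 := funext fun i ↦ by simp [hgain]
    exact hw.2 Sum.elim_zero_zero

lemma re_neg_of_isRoot_charpoly_closedLoopMatrix {G : Matrix n n ℝ} {d : n → ℝ}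
    (hG : IsDigraphLaplacian G) (hd : ∀ i, 0 ≤ d i) (hq : ∀ i, 0 < q i) (hr : 0 ≤ r)
    (hroot : ((closedLoopMatrix G d q r).charpoly.map (algebraMap ℝ ℂ)).IsRoot μ) (hμ0 : μ ≠ 0) :
    μ.re < 0 := by
  by_contra! hμ
  rw [← charpoly_map, closedLoopMatrix_map, ← charpoly_toLin',
    ← hasEigenvalue_iff_isRoot_charpoly] at hroot
  have hgain : ∀ i, 0 < (transferGain (q i) r μ).re := fun i ↦ transferGain_re_pos (hq i) hr hμ
  obtain ⟨k, hk⟩ := hG.exists_add_eq_zero_of_hasEigenvalue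
    (hasEigenvalue_sub_diagonal_transferGain hq hr hμ hμ0 hroot) fun i ↦ by
      simpa using add_nonneg hμ (mul_nonneg (hd i) (hgain i).le)
  have hre : μ.re + d k * (transferGain (q k) r μ).re = 0 := by simpa using congrArg Complex.re hk
  have hprod : d k * (transferGain (q k) r μ).re = 0 :=
    ((add_eq_zero_iff_of_nonneg hμ (mul_nonneg (hd k) (hgain k).le)).mp hre).2
  have hdk : d k = 0 := (mul_eq_zero.mp hprod).resolve_right (hgain k).ne'
  exact hμ0 (by simpa [hdk] using hk)

end Stability

theorem F_spectrum_strongly_connected_general {G : Matrix n n ℝ} (hG : IsDigraphLaplacian G)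
    {d q : n → ℝ} (hd : ∀ i, 0 ≤ d i) (hq : ∀ i, 0 < q i) {r : ℝ} (hr : 0 < r) :
    (closedLoopMatrix G d q r).charpoly.rootMultiplicity 0 =
        Module.finrank ℝ (LinearMap.ker G.mulVecLin) ∧
      ∀ μ : ℂ, ((closedLoopMatrix G d q r).charpoly.map (algebraMap ℝ ℂ)).IsRoot μ →
        μ ≠ 0 → μ.re < 0 :=
  ⟨rootMultiplicity_charpoly_closedLoopMatrix hG hd hq hr, fun _ hroot hμ0 ↦
    re_neg_of_isRoot_charpoly_closedLoopMatrix hG hd hq hr.le hroot hμ0⟩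

/-- Lemma 1 for a strongly connected digraph: the closed-loop matrix
`F = [[L̃, -Δ̃], [Q* L̃, -Q*((1/R) I + Δ̃)]]` built on the scaled Laplacian `L̃ = L/S` of
a strongly connected weighted digraph, with positive diagonal `Δ̃`, `Q*` and `R > 0`,
has a zero eigenvalue of algebraic multiplicity one, and all other eigenvalues have
negative real parts. -/
theorem F_spectrum_strongly_connected (N : ℕ) (hN : 2 ≤ N)
    (a : Fin N → Fin N → ℝ) (hnn : ∀ i j, 0 ≤ a i j) (hdiag : ∀ i, a i i = 0)
    (hsc : ∀ i j : Fin N, Relation.ReflTransGen (fun p q => 0 < a p q) i j)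
    (S : ℝ) (hS : 0 < S)
    (L : Matrix (Fin N) (Fin N) ℝ)
    (hL : ∀ i j, L i j = if i = j then -(∑ k, a i k) else a i j)
    (d q : Fin N → ℝ) (hd : ∀ i, d i = (∑ k, a i k) / S) (hq : ∀ i, 0 < q i)
    (R : ℝ) (hR : 0 < R) :
    let Lt : Matrix (Fin N) (Fin N) ℝ := (1 / S) • L
    let Δ : Matrix (Fin N) (Fin N) ℝ := Matrix.diagonal d
    let Q : Matrix (Fin N) (Fin N) ℝ := Matrix.diagonal q
    let F : Matrix (Fin N ⊕ Fin N) (Fin N ⊕ Fin N) ℝ :=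
      Matrix.fromBlocks Lt (-Δ) (Q * Lt) (-(Q * ((1 / R) • (1 : Matrix (Fin N) (Fin N) ℝ) + Δ)))
    Polynomial.rootMultiplicity 0 F.charpoly = 1 ∧
    (∀ μ : ℂ, (F.charpoly.map (algebraMap ℝ ℂ)).IsRoot μ → μ ≠ 0 → μ.re < 0) := by
  intro Lt Δ Q F
  have hLt : IsDigraphLaplacian Lt :=
    (IsDigraphLaplacian.of_weights hnn hdiag hL).smul (by positivity)
  have hd0 : ∀ i, 0 ≤ d i := fun i ↦ hd i ▸ div_nonneg (Finset.sum_nonneg fun k _ ↦ hnn i k) hS.le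
  have hker : Module.finrank ℝ (LinearMap.ker Lt.mulVecLin) = 1 :=
    hLt.finrank_ker_mulVecLin_eq_one (r := ⟨0, by omega⟩) fun i ↦
      IsDigraphLaplacian.reflTransGen_smul_of_weights hdiag hL (one_div_pos.mpr hS) (hsc i _)
  exact hker ▸ F_spectrum_strongly_connected_general hLt hd0 hq (one_div_pos.mpr hR)
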